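/- Let (Γ, μ) be a finite measure space and let j : Γ × ℝ^d → ℝ satisfy: (H1) for every ξ ∈ ℝ^d the map x ↦ j(x, ξ) is measurable and j(·, 0) ∈ L¹(Γ, μ); (H2) for μ-a.e. x ∈ Γ the map ξ ↦ j(x, ξ) is locally Lipschitz on ℝ^d; (H3) there exist k₀, k₁ ≥ 0 such that for μ-a.e. x and all ξ ∈ ℝ^d, every η ∈ ∂j(x, ξ) satisfies |η| ≤ k₀ + k₁|ξ|. Define J(v) := ∫_Γ j(x, v(x)) dμ(x) for v ∈ L²(Γ, μ; ℝ^d). Let u, v ∈ L²(Γ, μ; ℝ^d) and assume the map x ↦ j⁰(x, u(x); v(x)) is measurable. Then J⁰(u; v) ≤ ∫_Γ j⁰(x, u(x); v(x)) dμ(x), where J⁰ is the Clarke generalized directional derivative of J on L²(Γ, μ; ℝ^d). -/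

import Mathlib

open Filter Topology MeasureTheory
open scoped RealInnerProductSpace

/-- The Clarke generalized directional derivative of `f` at `x` in the direction `v`:
`f⁰(x; v) = limsup_{y → x, λ ↓ 0} (f (y + λ v) - f y) / λ`. -/
noncomputable def clarkeDeriv {X : Type*} [NormedAddCommGroup X] [NormedSpace ℝ X]
    (f : X → ℝ) (x v : X) : ℝ :=
  Filter.limsup (fun p : X × ℝ => (f (p.1 + p.2 • v) - f p.1) / p.2)
    ((𝓝 x) ×ˢ (𝓝[>] (0 : ℝ)))

/-- The Clarke subdifferential of `f` at `x`, identified with a subset of the space itself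
via the inner product: `∂f(x) = {η : ⟪η, v⟫ ≤ f⁰(x; v) for all v}`. -/
def clarkeSubdiffInner {X : Type*} [NormedAddCommGroup X] [InnerProductSpace ℝ X]
    (f : X → ℝ) (x : X) : Set X :=
  {η | ∀ v : X, ⟪η, v⟫ ≤ clarkeDeriv f x v}

/-!
By the Hahn–Banach theorem the Clarke derivative `f⁰(x; ·)` is the support function of `∂f(x)`, so
the growth of `∂j(x, ·)` bounds `j⁰(x, ·; ·)`, and the mean value inequality turns this into
`|j(x, ζ) - j(x, ξ)| ≤ (a(x) + k (‖ξ‖ + ‖ζ‖)) ‖ζ - ξ‖`. Integration gives the same kind of estimate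
for `J` on `L²`, so `J` is locally Lipschitz and `J⁰(u; v)` is the limsup of integrals of pointwise
difference quotients. Along a sequence `wₙ → u` in `L²` that also converges almost everywhere these
quotients are at most a fixed integrable function plus `2k ‖wₙ - u‖ ‖v‖`, which tends to `0` in
`L¹`, and Fatou's lemma applies from above.
-/

section Quotient

variable {X : Type*} [NormedAddCommGroup X] [NormedSpace ℝ X]

/-- The difference quotient `(f (y + t v) - f y) / t` at `p = (y, t)` whose limsup as `y → x` and
`t ↓ 0` is the Clarke derivative of `f` at `x` in the direction `v`. -/
noncomputable def clarkeQuotient (f : X → ℝ) (v : X) (p : X × ℝ) : ℝ :=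
  (f (p.1 + p.2 • v) - f p.1) / p.2

theorem tendsto_add_smul_nhds_prod_nhdsGT_zero (x v : X) :
    Tendsto (fun p : X × ℝ => p.1 + p.2 • v) (𝓝 x ×ˢ 𝓝[>] (0 : ℝ)) (𝓝 x) := by
  have hcont : Continuous fun p : X × ℝ => p.1 + p.2 • v := by fun_prop
  have hlim := hcont.tendsto (x, 0)
  rw [zero_smul, add_zero, nhds_prod_eq] at hlim
  exact hlim.mono_left (prod_mono le_rfl nhdsWithin_le_nhds)

theorem eventually_snd_mem_Ioc_zero_one {α : Type*} (l : Filter α) :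
    ∀ᶠ p : α × ℝ in l ×ˢ 𝓝[>] (0 : ℝ), p.2 ∈ Set.Ioc (0 : ℝ) 1 :=
  tendsto_snd.eventually (Ioc_mem_nhdsGT zero_lt_one)

theorem exists_eventually_abs_clarkeQuotient_le {f : X → ℝ} (hf : LocallyLipschitz f) (x : X) :
    ∃ K : ℝ, ∀ v : X, ∀ᶠ p in 𝓝 x ×ˢ 𝓝[>] (0 : ℝ), |clarkeQuotient f v p| ≤ K * ‖v‖ := by
  obtain ⟨K, s, hs, hK⟩ := hf x
  refine ⟨K, fun v => ?_⟩
  filter_upwards [(tendsto_add_smul_nhds_prod_nhdsGT_zero x v).eventually hs,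
    tendsto_fst.eventually hs, eventually_snd_mem_Ioc_zero_one (𝓝 x)] with p hpv hp ⟨hpos, _⟩
  have hdist := hK.dist_le_mul _ hpv _ hp
  rw [Real.dist_eq, dist_eq_norm, add_sub_cancel_left, norm_smul, Real.norm_of_nonneg hpos.le]
    at hdist
  rw [clarkeQuotient, abs_div, abs_of_pos hpos, div_le_iff₀ hpos]
  linarith

end Quotient

section ClarkeDeriv

variable {X : Type*} [NormedAddCommGroup X] [NormedSpace ℝ X] {f : X → ℝ}

theorem clarkeDeriv_le_of_eventually_le (hf : LocallyLipschitz f) {x v : X} {c : ℝ}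
    (h : ∀ᶠ p in 𝓝 x ×ˢ 𝓝[>] (0 : ℝ), clarkeQuotient f v p ≤ c) : clarkeDeriv f x v ≤ c := by
  obtain ⟨K, hK⟩ := exists_eventually_abs_clarkeQuotient_le hf x
  have hbdd : IsBoundedUnder (· ≥ ·) (𝓝 x ×ˢ 𝓝[>] (0 : ℝ)) (clarkeQuotient f v) :=
    isBoundedUnder_of_eventually_ge ((hK v).mono fun p hp => (abs_le.1 hp).1)
  exact limsup_le_of_le hbdd.isCoboundedUnder_le h

theorem eventually_clarkeQuotient_lt (hf : LocallyLipschitz f) {x v : X} {c : ℝ}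
    (h : clarkeDeriv f x v < c) :
    ∀ᶠ p in 𝓝 x ×ˢ 𝓝[>] (0 : ℝ), clarkeQuotient f v p < c := by
  obtain ⟨K, hK⟩ := exists_eventually_abs_clarkeQuotient_le hf x
  exact eventually_lt_of_limsup_lt h
    (isBoundedUnder_of_eventually_le ((hK v).mono fun p hp => (abs_le.1 hp).2))

theorem exists_forall_clarkeDeriv_le_mul_norm (hf : LocallyLipschitz f) (x : X) :
    ∃ K : ℝ, ∀ v, clarkeDeriv f x v ≤ K * ‖v‖ := by
  obtain ⟨K, hK⟩ := exists_eventually_abs_clarkeQuotient_le hf x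
  exact ⟨K, fun v => clarkeDeriv_le_of_eventually_le hf
    ((hK v).mono fun p hp => (le_abs_self _).trans hp)⟩

theorem clarkeDeriv_zero (f : X → ℝ) (x : X) : clarkeDeriv f x 0 = 0 := by
  simp [clarkeDeriv]

theorem clarkeDeriv_add_le (hf : LocallyLipschitz f) (x v w : X) :
    clarkeDeriv f x (v + w) ≤ clarkeDeriv f x v + clarkeDeriv f x w := by
  refine le_of_forall_pos_le_add fun ε hε => clarkeDeriv_le_of_eventually_le hf ?_
  have hv := eventually_clarkeQuotient_lt hf (lt_add_of_pos_right (clarkeDeriv f x v) (half_pos hε))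
  have hw := eventually_clarkeQuotient_lt hf (lt_add_of_pos_right (clarkeDeriv f x w) (half_pos hε))
  have hshift : Tendsto (fun p : X × ℝ => (p.1 + p.2 • v, p.2)) (𝓝 x ×ˢ 𝓝[>] (0 : ℝ))
      (𝓝 x ×ˢ 𝓝[>] (0 : ℝ)) :=
    (tendsto_add_smul_nhds_prod_nhdsGT_zero x v).prodMk tendsto_snd
  filter_upwards [hv, hshift.eventually hw] with p hpv hpw
  have hsplit : clarkeQuotient f (v + w) p =
      clarkeQuotient f w (p.1 + p.2 • v, p.2) + clarkeQuotient f v p := by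
    simp only [clarkeQuotient, smul_add, ← add_assoc]
    ring
  linarith

theorem clarkeDeriv_smul_le (hf : LocallyLipschitz f) (x v : X) {c : ℝ} (hc : 0 < c) :
    clarkeDeriv f x (c • v) ≤ c * clarkeDeriv f x v := by
  rw [← div_le_iff₀' hc]
  refine le_of_forall_gt_imp_ge_of_dense fun b hb => ?_
  rw [div_le_iff₀' hc]
  have hmul : Tendsto (fun t : ℝ => c * t) (𝓝[>] 0) (𝓝[>] 0) :=
    fun _ => eventually_nhdsGT_zero_mul_left hc
  have hscale : Tendsto (fun p : X × ℝ => (p.1, c * p.2)) (𝓝 x ×ˢ 𝓝[>] (0 : ℝ))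
      (𝓝 x ×ˢ 𝓝[>] (0 : ℝ)) := tendsto_fst.prodMk (hmul.comp tendsto_snd)
  refine clarkeDeriv_le_of_eventually_le hf ?_
  filter_upwards [hscale.eventually (eventually_clarkeQuotient_lt hf hb)] with p hp
  have hquot : clarkeQuotient f (c • v) p = c * clarkeQuotient f v (p.1, c * p.2) := by
    simp only [clarkeQuotient, smul_smul, mul_comm p.2 c]
    field_simp
  rw [hquot]
  gcongr

theorem clarkeDeriv_smul (hf : LocallyLipschitz f) (x v : X) {c : ℝ} (hc : 0 < c) :
    clarkeDeriv f x (c • v) = c * clarkeDeriv f x v := by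
  refine (clarkeDeriv_smul_le hf x v hc).antisymm ?_
  have hinv := clarkeDeriv_smul_le hf x (c • v) (inv_pos.2 hc)
  rwa [inv_smul_smul₀ hc.ne', ← div_eq_inv_mul, le_div_iff₀' hc] at hinv

theorem neg_clarkeDeriv_le_clarkeDeriv_neg (hf : LocallyLipschitz f) (x v : X) :
    -clarkeDeriv f x v ≤ clarkeDeriv f x (-v) := by
  have hadd := clarkeDeriv_add_le hf x v (-v)
  rw [add_neg_cancel, clarkeDeriv_zero] at hadd
  linarith

theorem sub_le_of_forall_segment_clarkeDeriv_le (hf : LocallyLipschitz f) {x y : X} {C : ℝ}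
    (h : ∀ z ∈ segment ℝ x y, clarkeDeriv f z (y - x) ≤ C) : f y - f x ≤ C := by
  set γ : ℝ → X := fun t => x + t • (y - x) with hγ
  have hslope : ∀ t ∈ Set.Ico (0 : ℝ) 1, ∀ r, C < r → ∃ᶠ s in 𝓝[>] t, slope (f ∘ γ) t s < r := by
    intro t ht r hr
    have hmem : γ t ∈ segment ℝ x y := by
      rw [segment_eq_image']
      exact ⟨t, Set.Ico_subset_Icc_self ht, rfl⟩
    have hsub : Tendsto (fun s : ℝ => s - t) (𝓝[>] t) (𝓝[>] 0) :=
      tendsto_nhdsWithin_iff.2 ⟨tendsto_nhdsWithin_of_tendsto_nhds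
        (Continuous.tendsto' (by fun_prop) _ _ (sub_self t)),
        eventually_mem_nhdsWithin.mono fun s hs => Set.mem_Ioi.2 (sub_pos.2 hs)⟩
    have hquot := (tendsto_const_nhds.prodMk hsub).eventually
      (eventually_clarkeQuotient_lt hf ((h _ hmem).trans_lt hr))
    refine (hquot.mono fun s hs => ?_).frequently
    have hγs : γ t + (s - t) • (y - x) = γ s := by simp only [hγ]; module
    simpa only [slope_def_field, Function.comp_apply, clarkeQuotient, hγs] using hs
  have hline := image_le_of_liminf_slope_right_le_deriv_boundary (f := f ∘ γ) (a := 0) (b := 1)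
    (B := fun t => f x + C * t) (B' := fun _ => C)
    (hf.continuous.comp (by fun_prop)).continuousOn (by simp [hγ]) (by fun_prop)
    (fun t _ => by simpa using ((hasDerivWithinAt_id t _).const_mul C).const_add (f x)) hslope
    (Set.right_mem_Icc.2 zero_le_one)
  simp only [hγ, Function.comp_apply, one_smul, add_sub_cancel, mul_one] at hline
  linarith

end ClarkeDeriv

section Subdifferential

theorem exists_linearMap_eq_and_forall_le_of_sublinear {V : Type*} [AddCommGroup V] [Module ℝ V]
    {N : V → ℝ} (N_hom : ∀ c : ℝ, 0 < c → ∀ x, N (c • x) = c * N x)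
    (N_add : ∀ x y, N (x + y) ≤ N x + N y) (v : V) :
    ∃ g : V →ₗ[ℝ] ℝ, g v = N v ∧ ∀ w, g w ≤ N w := by
  have N_zero : N 0 = 0 := by
    have h := N_hom 2 two_pos 0
    rw [smul_zero] at h
    linarith
  have hle : ∀ t : ℝ, t * N v ≤ N (t • v) := by
    intro t
    rcases lt_trichotomy t 0 with ht | rfl | ht
    · have hneg := N_add (t • v) ((-t) • v)
      rw [← add_smul, add_neg_cancel, zero_smul, N_zero, N_hom _ (neg_pos.2 ht)] at hneg
      linarith
    · simp [N_zero]
    · exact (N_hom t ht v).ge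
  have hker : ∀ t : ℝ, t • v = 0 → t • N v = 0 := fun t ht => by
    rcases smul_eq_zero.1 ht with rfl | rfl <;> simp [N_zero]
  obtain ⟨g, hgv, hg⟩ := exists_extension_of_le_sublinear
    (LinearPMap.mkSpanSingleton' (σ := RingHom.id ℝ) v (N v) hker) N N_hom N_add (by
      rintro ⟨w, hw⟩
      obtain ⟨t, rfl⟩ := Submodule.mem_span_singleton.1 hw
      rw [LinearPMap.mkSpanSingleton'_apply]
      exact hle t)
  refine ⟨g, ?_, hg⟩
  exact (hgv ⟨v, Submodule.mem_span_singleton_self v⟩).trans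
    (LinearPMap.mkSpanSingleton'_apply_self v (N v) hker _)

variable {X : Type*} [NormedAddCommGroup X] [InnerProductSpace ℝ X] [CompleteSpace X] {f : X → ℝ}

theorem exists_mem_clarkeSubdiffInner_inner_eq (hf : LocallyLipschitz f) (x v : X) :
    ∃ η ∈ clarkeSubdiffInner f x, ⟪η, v⟫ = clarkeDeriv f x v := by
  obtain ⟨g, hgv, hg⟩ := exists_linearMap_eq_and_forall_le_of_sublinear
    (fun c hc w => clarkeDeriv_smul hf x w hc) (clarkeDeriv_add_le hf x) v
  obtain ⟨K, hK⟩ := exists_forall_clarkeDeriv_le_mul_norm hf x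
  have hbound : ∀ w, ‖g w‖ ≤ K * ‖w‖ := fun w => abs_le'.2
    ⟨(hg w).trans (hK w), by simpa using (hg (-w)).trans (hK (-w))⟩
  refine ⟨(InnerProductSpace.toDual ℝ X).symm (g.mkContinuous K hbound), fun w => ?_, ?_⟩
  · simpa using hg w
  · simpa using hgv

theorem clarkeDeriv_le_mul_norm_of_forall_mem_clarkeSubdiffInner (hf : LocallyLipschitz f) {x : X}
    {C : ℝ} (hC : ∀ η ∈ clarkeSubdiffInner f x, ‖η‖ ≤ C) (v : X) :
    clarkeDeriv f x v ≤ C * ‖v‖ := by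
  obtain ⟨η, hη, hηv⟩ := exists_mem_clarkeSubdiffInner_inner_eq hf x v
  calc clarkeDeriv f x v = ⟪η, v⟫ := hηv.symm
    _ ≤ ‖η‖ * ‖v‖ := real_inner_le_norm η v
    _ ≤ C * ‖v‖ := by gcongr; exact hC η hη

end Subdifferential

section LinearGrowth

variable {X : Type*} [NormedAddCommGroup X] {f : X → ℝ} {a k : ℝ}

/-- The Lipschitz estimate satisfied by functions whose derivative has at most the linear growth
`a + k ‖x‖`. The sum `‖x‖ + ‖y‖` stands in for the maximum of the norm on the segment from `x` to
`y`, so that the estimate can be integrated term by term. -/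
def LipschitzLinearGrowth (f : X → ℝ) (a k : ℝ) : Prop :=
  ∀ x y, |f y - f x| ≤ (a + k * (‖x‖ + ‖y‖)) * ‖y - x‖

namespace LipschitzLinearGrowth

theorem of_sub_le (h : ∀ x y, f y - f x ≤ (a + k * (‖x‖ + ‖y‖)) * ‖y - x‖) :
    LipschitzLinearGrowth f a k := by
  refine fun x y => abs_le'.2 ⟨h x y, ?_⟩
  rw [neg_sub, add_comm ‖x‖, norm_sub_rev]
  exact h y x

theorem of_clarkeDeriv_le [NormedSpace ℝ X] (hf : LocallyLipschitz f) (hk : 0 ≤ k)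
    (h : ∀ x v, clarkeDeriv f x v ≤ (a + k * ‖x‖) * ‖v‖) : LipschitzLinearGrowth f a k := by
  refine of_sub_le fun x y => sub_le_of_forall_segment_clarkeDeriv_le hf fun z hz => ?_
  have hball : segment ℝ x y ⊆ Metric.closedBall 0 (‖x‖ + ‖y‖) :=
    (convex_closedBall 0 _).segment_subset (by simp) (by simp)
  have hnorm : ‖z‖ ≤ ‖x‖ + ‖y‖ := by simpa using hball hz
  exact (h z (y - x)).trans (by gcongr)

theorem locallyLipschitz (hf : LipschitzLinearGrowth f a k) (hk : 0 ≤ k) :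
    LocallyLipschitz f := by
  intro x
  refine ⟨_, Metric.closedBall x 1, Metric.closedBall_mem_nhds x one_pos,
    LipschitzOnWith.of_dist_le' (K := a + k * (2 * (‖x‖ + 1))) fun y hy z hz => ?_⟩
  have hnorm : ∀ w ∈ Metric.closedBall x 1, ‖w‖ ≤ ‖x‖ + 1 :=
    fun w hw => norm_le_of_mem_closedBall hw
  rw [dist_comm, dist_comm y, Real.dist_eq, dist_eq_norm]
  refine (hf y z).trans ?_
  gcongr
  linarith [hnorm y hy, hnorm z hz]

theorem abs_clarkeQuotient_le [NormedSpace ℝ X] (hf : LipschitzLinearGrowth f a k) (hk : 0 ≤ k)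
    (v : X) {p : X × ℝ} (hp : p.2 ∈ Set.Ioc (0 : ℝ) 1) :
    |clarkeQuotient f v p| ≤ (a + k * (2 * ‖p.1‖ + ‖v‖)) * ‖v‖ := by
  obtain ⟨hpos, hle⟩ := hp
  have hstep : ‖p.2 • v‖ = p.2 * ‖v‖ := by rw [norm_smul, Real.norm_of_nonneg hpos.le]
  have hnorm : ‖p.1 + p.2 • v‖ ≤ ‖p.1‖ + ‖v‖ :=
    (norm_add_le _ _).trans (by rw [hstep]; gcongr; exact mul_le_of_le_one_left (norm_nonneg v) hle)
  rw [clarkeQuotient, abs_div, abs_of_pos hpos, div_le_iff₀ hpos]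
  calc |f (p.1 + p.2 • v) - f p.1|
      ≤ (a + k * (‖p.1‖ + ‖p.1 + p.2 • v‖)) * (p.2 * ‖v‖) := by
        simpa only [add_sub_cancel_left, hstep] using hf p.1 (p.1 + p.2 • v)
    _ ≤ (a + k * (2 * ‖p.1‖ + ‖v‖)) * (p.2 * ‖v‖) := by
        rw [two_mul, add_assoc]
        gcongr
    _ = (a + k * (2 * ‖p.1‖ + ‖v‖)) * ‖v‖ * p.2 := by ring

theorem clarkeQuotient_le_add_norm_sub [NormedSpace ℝ X] (hf : LipschitzLinearGrowth f a k)
    (hk : 0 ≤ k) (x v : X) {p : X × ℝ} (hp : p.2 ∈ Set.Ioc (0 : ℝ) 1) :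
    clarkeQuotient f v p ≤
      (a + k * (2 * ‖x‖ + ‖v‖)) * ‖v‖ + 2 * k * (‖p.1 - x‖ * ‖v‖) :=
  calc clarkeQuotient f v p
      ≤ (a + k * (2 * ‖p.1‖ + ‖v‖)) * ‖v‖ :=
        (le_abs_self _).trans (hf.abs_clarkeQuotient_le hk v hp)
    _ ≤ (a + k * (2 * (‖x‖ + ‖p.1 - x‖) + ‖v‖)) * ‖v‖ := by
        gcongr
        exact norm_le_norm_add_norm_sub' _ _
    _ = (a + k * (2 * ‖x‖ + ‖v‖)) * ‖v‖ + 2 * k * (‖p.1 - x‖ * ‖v‖) := by ring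

theorem abs_clarkeDeriv_le [NormedSpace ℝ X] (hf : LipschitzLinearGrowth f a k) (hk : 0 ≤ k)
    (x v : X) : |clarkeDeriv f x v| ≤ (a + k * (2 * ‖x‖ + ‖v‖)) * ‖v‖ := by
  have hlip := hf.locallyLipschitz hk
  have hupper : ∀ w, clarkeDeriv f x w ≤ (a + k * (2 * ‖x‖ + ‖w‖)) * ‖w‖ := by
    refine fun w => le_of_forall_gt_imp_ge_of_dense fun c hc => ?_
    have hcont : Continuous fun y : X => (a + k * (2 * ‖y‖ + ‖w‖)) * ‖w‖ := by fun_prop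
    refine clarkeDeriv_le_of_eventually_le hlip ?_
    filter_upwards [tendsto_fst.eventually ((hcont.tendsto x).eventually_lt_const hc),
      eventually_snd_mem_Ioc_zero_one (𝓝 x)] with p hpc hp
    exact ((le_abs_self _).trans (hf.abs_clarkeQuotient_le hk w hp)).trans hpc.le
  refine abs_le'.2 ⟨hupper v, (neg_clarkeDeriv_le_clarkeDeriv_neg hlip x v).trans ?_⟩
  simpa only [norm_neg] using hupper (-v)

end LipschitzLinearGrowth

end LinearGrowth

section Integration

variable {Γ E F : Type*} [MeasurableSpace Γ] {μ : Measure Γ} [NormedAddCommGroup E]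
  [NormedAddCommGroup F]

theorem integrable_norm_mul_norm_of_memLp_two {f : Γ → E} {g : Γ → F} (hf : MemLp f 2 μ)
    (hg : MemLp g 2 μ) : Integrable (fun x => ‖f x‖ * ‖g x‖) μ :=
  hf.norm.integrable_mul hg.norm

theorem integral_norm_mul_norm_le_eLpNorm_two_mul {f : Γ → E} {g : Γ → F} (hf : MemLp f 2 μ)
    (hg : MemLp g 2 μ) :
    ∫ x, ‖f x‖ * ‖g x‖ ∂μ ≤ (eLpNorm f 2 μ).toReal * (eLpNorm g 2 μ).toReal := by
  have hinner : ⟪hf.norm.toLp _, hg.norm.toLp _⟫ = ∫ x, ‖f x‖ * ‖g x‖ ∂μ := by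
    rw [L2.inner_def]
    refine integral_congr_ae ?_
    filter_upwards [hf.norm.coeFn_toLp, hg.norm.coeFn_toLp] with x hfx hgx
    rw [hfx, hgx, RCLike.inner_apply', conj_trivial]
  simpa only [hinner, Lp.norm_toLp, eLpNorm_norm] using
    real_inner_le_norm (hf.norm.toLp _) (hg.norm.toLp _)

theorem tendsto_integral_norm_sub_mul_norm_zero {ι : Type*} {l : Filter ι} {w : ι → Lp E 2 μ}
    {u : Lp E 2 μ} (hw : Tendsto w l (𝓝 u)) {g : Γ → F} (hg : MemLp g 2 μ) :
    Tendsto (fun i => ∫ x, ‖(w i - u) x‖ * ‖g x‖ ∂μ) l (𝓝 0) := by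
  have hupper : Tendsto (fun i => ‖w i - u‖ * (eLpNorm g 2 μ).toReal) l (𝓝 0) := by
    simpa using (tendsto_iff_norm_sub_tendsto_zero.1 hw).mul_const (eLpNorm g 2 μ).toReal
  exact squeeze_zero (fun i => integral_nonneg fun x => by positivity)
    (fun i => integral_norm_mul_norm_le_eLpNorm_two_mul (Lp.memLp _) hg) hupper

theorem aestronglyMeasurable_comp_of_ae_continuous {j : Γ → E → F}
    (hmeas : ∀ ξ, AEStronglyMeasurable (fun x => j x ξ) μ) (hcont : ∀ᵐ x ∂μ, Continuous (j x))
    {w : Γ → E} (hw : AEStronglyMeasurable w μ) :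
    AEStronglyMeasurable (fun x => j x (w x)) μ := by
  obtain ⟨w', hw', hww'⟩ := hw
  have hsimple : ∀ s : SimpleFunc Γ E, AEStronglyMeasurable (fun x => j x (s x)) μ := by
    intro s
    have hsum : (fun x => j x (s x)) =
        fun x => ∑ ξ ∈ s.range, (s ⁻¹' {ξ}).indicator (fun x => j x ξ) x := by
      ext x
      rw [Finset.sum_eq_single_of_mem (s x) (s.mem_range_self x)
        fun ξ _ hξ => Set.indicator_of_notMem (fun h => hξ h.symm) _]
      exact (Set.indicator_of_mem rfl _).symm
    rw [hsum]
    exact Finset.aestronglyMeasurable_fun_sum _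
      fun ξ _ => (hmeas ξ).indicator (s.measurableSet_fiber ξ)
  refine aestronglyMeasurable_of_tendsto_ae atTop (fun n => hsimple (hw'.approx n)) ?_
  filter_upwards [hcont, hww'] with x hx hwx
  rw [hwx]
  exact (hx.tendsto _).comp (hw'.tendsto_approx x)

theorem eventually_integral_lt_of_dominated {ι : Type*} {l : Filter ι} [l.IsCountablyGenerated]
    {q r : ι → Γ → ℝ} {D G : Γ → ℝ} (hq : ∀ i, Integrable (q i) μ) (hr : ∀ i, Integrable (r i) μ)
    (hD : Integrable D μ) (hG : Integrable G μ) (hr_nonneg : ∀ i x, 0 ≤ r i x)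
    (hr_lim : Tendsto (fun i => ∫ x, r i x ∂μ) l (𝓝 0))
    (hbound : ∀ᶠ i in l, ∀ᵐ x ∂μ, q i x ≤ G x + r i x)
    (hlim : ∀ᵐ x ∂μ, ∀ c, D x < c → ∀ᶠ i in l, q i x < c) {c : ℝ} (hc : ∫ x, D x ∂μ < c) :
    ∀ᶠ i in l, ∫ x, q i x ∂μ < c := by
  set excess : ι → Γ → ℝ := fun i x => max (q i x - r i x - D x) 0
  have hexcess : ∀ i, Integrable (excess i) μ := fun i =>
    (((hq i).sub (hr i)).sub hD).sup (integrable_zero _ _ _)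
  have hexcess_lim : Tendsto (fun i => ∫ x, excess i x ∂μ) l (𝓝 0) := by
    rw [← integral_zero Γ ℝ (μ := μ)]
    refine tendsto_integral_filter_of_dominated_convergence (fun x => |G x - D x|)
      (.of_forall fun i => (hexcess i).aestronglyMeasurable) ?_ (hG.sub hD).abs ?_
    · filter_upwards [hbound] with i hi
      filter_upwards [hi] with x hx
      rw [Real.norm_of_nonneg (le_max_right _ _)]
      exact max_le (le_trans (by linarith) (le_abs_self _)) (abs_nonneg _)
    · filter_upwards [hlim] with x hx
      refine tendsto_order.2 ⟨fun b hb => .of_forall fun i => hb.trans_le (le_max_right _ _),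
        fun b hb => ?_⟩
      filter_upwards [hx _ (lt_add_of_pos_right (D x) hb)] with i hi
      exact max_lt (by linarith [hr_nonneg i x]) hb
  have hsum_lim : Tendsto (fun i => ∫ x, D x ∂μ + ∫ x, excess i x ∂μ + ∫ x, r i x ∂μ) l
      (𝓝 (∫ x, D x ∂μ)) := by
    simpa using (hexcess_lim.const_add (∫ x, D x ∂μ)).add hr_lim
  filter_upwards [hsum_lim.eventually_lt_const hc] with i hi
  have hD_add : Integrable (fun x => D x + excess i x) μ := hD.add (hexcess i)
  calc ∫ x, q i x ∂μ ≤ ∫ x, (D x + excess i x + r i x) ∂μ :=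
        integral_mono (hq i) (hD_add.add (hr i)) fun x => by
          linarith [le_max_left (q i x - r i x - D x) 0]
    _ = ∫ x, D x ∂μ + ∫ x, excess i x ∂μ + ∫ x, r i x ∂μ := by
        rw [integral_add hD_add (hr i), integral_add hD (hexcess i)]
    _ < c := hi

theorem eventually_nhds_prod_of_forall_seq_tendsto_ae {p : ENNReal} [Fact (1 ≤ p)] {u : Lp E p μ}
    {β : Type*} {l : Filter β} [l.IsCountablyGenerated] {P : Lp E p μ × β → Prop}
    (h : ∀ (w : ℕ → Lp E p μ) (t : ℕ → β), Tendsto w atTop (𝓝 u) → Tendsto t atTop l →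
      (∀ᵐ x ∂μ, Tendsto (fun n => w n x) atTop (𝓝 (u x))) → ∃ n, P (w n, t n)) :
    ∀ᶠ z in 𝓝 u ×ˢ l, P z := by
  by_contra hP
  obtain ⟨z, hz, hzP⟩ := exists_seq_forall_of_frequently (not_eventually.1 hP)
  have hz_fst : Tendsto (fun n => (z n).1) atTop (𝓝 u) := tendsto_fst.comp hz
  obtain ⟨ns, hns, hae⟩ := (tendstoInMeasure_of_tendsto_Lp hz_fst).exists_seq_tendsto_ae
  obtain ⟨n, hn⟩ := h _ _ (hz_fst.comp hns.tendsto_atTop)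
    ((tendsto_snd.comp hz).comp hns.tendsto_atTop) hae
  exact hzP (ns n) hn

end Integration

section IntegralFunctional

variable {Γ E : Type*} [MeasurableSpace Γ] {μ : Measure Γ} [NormedAddCommGroup E]
  {j : Γ → E → ℝ} {a : Γ → ℝ} {k : ℝ}

/-- The integral functional `J(w) = ∫ j(x, w(x)) dμ` on `L²(Γ, μ; E)`. -/
noncomputable def integralFunctional (μ : Measure Γ) (j : Γ → E → ℝ) (w : Lp E 2 μ) : ℝ :=
  ∫ x, j x (w x) ∂μ

theorem integrable_linearGrowth_mul_norm {h : Γ → ℝ} (ha : MemLp a 2 μ) (hh : MemLp h 2 μ)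
    (v : Lp E 2 μ) : Integrable (fun x => (a x + k * h x) * ‖v x‖) μ :=
  (ha.add (hh.const_mul k)).integrable_mul (Lp.memLp v).norm

theorem integrable_comp_of_lipschitzLinearGrowth
    (hmeas : ∀ ξ, AEStronglyMeasurable (fun x => j x ξ) μ) (hint : Integrable (fun x => j x 0) μ)
    (ha : MemLp a 2 μ) (hk : 0 ≤ k) (hj : ∀ᵐ x ∂μ, LipschitzLinearGrowth (j x) (a x) k)
    (w : Lp E 2 μ) : Integrable (fun x => j x (w x)) μ := by
  have hcont : ∀ᵐ x ∂μ, Continuous (j x) := hj.mono fun x hx => (hx.locallyLipschitz hk).continuous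
  refine (hint.norm.add (integrable_linearGrowth_mul_norm ha (Lp.memLp w).norm w (k := k))).mono'
    (aestronglyMeasurable_comp_of_ae_continuous hmeas hcont (Lp.aestronglyMeasurable w)) ?_
  filter_upwards [hj] with x hx
  have hsub : ‖j x (w x) - j x 0‖ ≤ (a x + k * ‖w x‖) * ‖w x‖ := by
    simpa only [Real.norm_eq_abs, norm_zero, zero_add, sub_zero] using hx 0 (w x)
  exact (norm_le_norm_add_norm_sub' _ _).trans (add_le_add_right hsub _)

theorem integral_linearGrowth_mul_norm_le (ha : MemLp a 2 μ) (hk : 0 ≤ k) (w z h : Lp E 2 μ) :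
    ∫ x, (a x + k * (‖w x‖ + ‖z x‖)) * ‖h x‖ ∂μ ≤
      ((eLpNorm a 2 μ).toReal + k * (‖w‖ + ‖z‖)) * ‖h‖ := by
  have hah := integrable_norm_mul_norm_of_memLp_two ha (Lp.memLp h)
  have hwh := (integrable_norm_mul_norm_of_memLp_two (Lp.memLp w) (Lp.memLp h)).const_mul k
  have hzh := (integrable_norm_mul_norm_of_memLp_two (Lp.memLp z) (Lp.memLp h)).const_mul k
  have hawh : Integrable (fun x => ‖a x‖ * ‖h x‖ + k * (‖w x‖ * ‖h x‖)) μ := hah.add hwh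
  calc ∫ x, (a x + k * (‖w x‖ + ‖z x‖)) * ‖h x‖ ∂μ
      ≤ ∫ x, (‖a x‖ * ‖h x‖ + k * (‖w x‖ * ‖h x‖) + k * (‖z x‖ * ‖h x‖)) ∂μ := by
        refine integral_mono (integrable_linearGrowth_mul_norm ha
          ((Lp.memLp w).norm.add (Lp.memLp z).norm) h) (hawh.add hzh) fun x => ?_
        linarith [mul_le_mul_of_nonneg_right (Real.le_norm_self (a x)) (norm_nonneg (h x))]
    _ = ∫ x, ‖a x‖ * ‖h x‖ ∂μ + k * ∫ x, ‖w x‖ * ‖h x‖ ∂μ + k * ∫ x, ‖z x‖ * ‖h x‖ ∂μ := by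
        rw [integral_add hawh hzh, integral_add hah hwh, integral_const_mul, integral_const_mul]
    _ ≤ (eLpNorm a 2 μ).toReal * ‖h‖ + k * (‖w‖ * ‖h‖) + k * (‖z‖ * ‖h‖) := by
        gcongr
        exacts [integral_norm_mul_norm_le_eLpNorm_two_mul ha (Lp.memLp h),
          integral_norm_mul_norm_le_eLpNorm_two_mul (Lp.memLp w) (Lp.memLp h),
          integral_norm_mul_norm_le_eLpNorm_two_mul (Lp.memLp z) (Lp.memLp h)]
    _ = ((eLpNorm a 2 μ).toReal + k * (‖w‖ + ‖z‖)) * ‖h‖ := by ring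

theorem lipschitzLinearGrowth_integralFunctional
    (hJ : ∀ w : Lp E 2 μ, Integrable (fun x => j x (w x)) μ) (ha : MemLp a 2 μ) (hk : 0 ≤ k)
    (hj : ∀ᵐ x ∂μ, LipschitzLinearGrowth (j x) (a x) k) :
    LipschitzLinearGrowth (integralFunctional μ j) (eLpNorm a 2 μ).toReal k := by
  refine .of_sub_le fun w z => ?_
  calc integralFunctional μ j z - integralFunctional μ j w
      = ∫ x, (j x (z x) - j x (w x)) ∂μ := (integral_sub (hJ z) (hJ w)).symm
    _ ≤ ∫ x, (a x + k * (‖w x‖ + ‖z x‖)) * ‖(z - w) x‖ ∂μ := by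
        refine integral_mono_ae ((hJ z).sub (hJ w)) (integrable_linearGrowth_mul_norm ha
          ((Lp.memLp w).norm.add (Lp.memLp z).norm) (z - w)) ?_
        filter_upwards [hj, Lp.coeFn_sub z w] with x hx hsub
        rw [hsub]
        exact (le_abs_self _).trans (hx (w x) (z x))
    _ ≤ ((eLpNorm a 2 μ).toReal + k * (‖w‖ + ‖z‖)) * ‖z - w‖ :=
        integral_linearGrowth_mul_norm_le ha hk w z (z - w)

section Derivative

variable [NormedSpace ℝ E]

theorem clarkeQuotient_comp_ae_eq (v : Lp E 2 μ) (p : Lp E 2 μ × ℝ) :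
    (fun x => (j x ((p.1 + p.2 • v) x) - j x (p.1 x)) / p.2) =ᵐ[μ]
      fun x => clarkeQuotient (j x) (v x) (p.1 x, p.2) := by
  filter_upwards [Lp.coeFn_add p.1 (p.2 • v), Lp.coeFn_smul p.2 v] with x hadd hsmul
  rw [hadd, Pi.add_apply, hsmul, Pi.smul_apply, clarkeQuotient]

theorem integrable_clarkeQuotient (hJ : ∀ w : Lp E 2 μ, Integrable (fun x => j x (w x)) μ)
    (v : Lp E 2 μ) (p : Lp E 2 μ × ℝ) :
    Integrable (fun x => clarkeQuotient (j x) (v x) (p.1 x, p.2)) μ :=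
  (((hJ _).sub (hJ _)).div_const _).congr (clarkeQuotient_comp_ae_eq v p)

theorem clarkeQuotient_integralFunctional
    (hJ : ∀ w : Lp E 2 μ, Integrable (fun x => j x (w x)) μ) (v : Lp E 2 μ) (p : Lp E 2 μ × ℝ) :
    clarkeQuotient (integralFunctional μ j) v p =
      ∫ x, clarkeQuotient (j x) (v x) (p.1 x, p.2) ∂μ := by
  rw [← integral_congr_ae (clarkeQuotient_comp_ae_eq v p), integral_div, integral_sub (hJ _) (hJ _)]
  rfl

theorem integrable_clarkeDeriv (ha : MemLp a 2 μ) (hk : 0 ≤ k)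
    (hj : ∀ᵐ x ∂μ, LipschitzLinearGrowth (j x) (a x) k) (u v : Lp E 2 μ)
    (hmeas : AEStronglyMeasurable (fun x => clarkeDeriv (j x) (u x) (v x)) μ) :
    Integrable (fun x => clarkeDeriv (j x) (u x) (v x)) μ :=
  (integrable_linearGrowth_mul_norm ha
    (((Lp.memLp u).norm.const_mul 2).add (Lp.memLp v).norm) v).mono' hmeas
    (hj.mono fun x hx => hx.abs_clarkeDeriv_le hk (u x) (v x))

theorem eventually_clarkeQuotient_integralFunctional_lt
    (hJ : ∀ w : Lp E 2 μ, Integrable (fun x => j x (w x)) μ) (ha : MemLp a 2 μ) (hk : 0 ≤ k)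
    (hj : ∀ᵐ x ∂μ, LipschitzLinearGrowth (j x) (a x) k) (u v : Lp E 2 μ)
    (hmeas : AEStronglyMeasurable (fun x => clarkeDeriv (j x) (u x) (v x)) μ) {c : ℝ}
    (hc : ∫ x, clarkeDeriv (j x) (u x) (v x) ∂μ < c) :
    ∀ᶠ p in 𝓝 u ×ˢ 𝓝[>] (0 : ℝ), clarkeQuotient (integralFunctional μ j) v p < c := by
  refine eventually_nhds_prod_of_forall_seq_tendsto_ae fun w t hw ht hae => ?_
  simp only [clarkeQuotient_integralFunctional hJ]
  set r : ℕ → Γ → ℝ := fun n x => 2 * k * (‖(w n - u) x‖ * ‖v x‖)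
  have hr_lim : Tendsto (fun n => ∫ x, r n x ∂μ) atTop (𝓝 0) := by
    simpa only [r, integral_const_mul, mul_zero] using
      (tendsto_integral_norm_sub_mul_norm_zero hw (Lp.memLp v)).const_mul (2 * k)
  have hbound : ∀ᶠ n in atTop, ∀ᵐ x ∂μ, clarkeQuotient (j x) (v x) (w n x, t n) ≤
      (a x + k * (2 * ‖u x‖ + ‖v x‖)) * ‖v x‖ + r n x := by
    filter_upwards [ht.eventually (Ioc_mem_nhdsGT zero_lt_one)] with n hn
    filter_upwards [hj, Lp.coeFn_sub (w n) u] with x hx hsub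
    simpa only [r, hsub, Pi.sub_apply] using
      hx.clarkeQuotient_le_add_norm_sub hk (u x) (v x) (p := (w n x, t n)) hn
  have hlim : ∀ᵐ x ∂μ, ∀ b, clarkeDeriv (j x) (u x) (v x) < b →
      ∀ᶠ n in atTop, clarkeQuotient (j x) (v x) (w n x, t n) < b := by
    filter_upwards [hj, hae] with x hx hwx b hb
    exact (hwx.prodMk ht).eventually (eventually_clarkeQuotient_lt (hx.locallyLipschitz hk) hb)
  exact (eventually_integral_lt_of_dominated (fun n => integrable_clarkeQuotient hJ v (w n, t n))
    (fun n => (integrable_norm_mul_norm_of_memLp_two (Lp.memLp _) (Lp.memLp v)).const_mul _)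
    (integrable_clarkeDeriv ha hk hj u v hmeas)
    (integrable_linearGrowth_mul_norm ha
      (((Lp.memLp u).norm.const_mul 2).add (Lp.memLp v).norm) v)
    (fun n x => by positivity) hr_lim hbound hlim hc).exists

theorem clarkeDeriv_integralFunctional_le
    (hJ : ∀ w : Lp E 2 μ, Integrable (fun x => j x (w x)) μ) (ha : MemLp a 2 μ) (hk : 0 ≤ k)
    (hj : ∀ᵐ x ∂μ, LipschitzLinearGrowth (j x) (a x) k) (u v : Lp E 2 μ)
    (hmeas : AEStronglyMeasurable (fun x => clarkeDeriv (j x) (u x) (v x)) μ) :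
    clarkeDeriv (integralFunctional μ j) u v ≤ ∫ x, clarkeDeriv (j x) (u x) (v x) ∂μ := by
  have hlip := (lipschitzLinearGrowth_integralFunctional hJ ha hk hj).locallyLipschitz hk
  refine le_of_forall_gt_imp_ge_of_dense fun c hc => clarkeDeriv_le_of_eventually_le hlip ?_
  exact (eventually_clarkeQuotient_integralFunctional_lt hJ ha hk hj u v hmeas hc).mono
    fun p hp => hp.le

end Derivative

end IntegralFunctional

theorem clarkeDeriv_integral_functional_le_general {Γ E : Type*} [MeasurableSpace Γ]
    {μ : Measure Γ} [NormedAddCommGroup E] [InnerProductSpace ℝ E] [CompleteSpace E]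
    {j : Γ → E → ℝ} (hmeas : ∀ ξ, AEStronglyMeasurable (fun x => j x ξ) μ)
    (hint0 : Integrable (fun x => j x 0) μ) (hlip : ∀ᵐ x ∂μ, LocallyLipschitz (j x))
    {a : Γ → ℝ} (ha : MemLp a 2 μ) {k : ℝ} (hk : 0 ≤ k)
    (hgrowth : ∀ᵐ x ∂μ, ∀ ξ, ∀ η ∈ clarkeSubdiffInner (j x) ξ, ‖η‖ ≤ a x + k * ‖ξ‖)
    (u v : Lp E 2 μ)
    (hmeas' : AEStronglyMeasurable (fun x => clarkeDeriv (j x) (u x) (v x)) μ) :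
    clarkeDeriv (fun w : Lp E 2 μ => ∫ x, j x (w x) ∂μ) u v ≤
      ∫ x, clarkeDeriv (j x) (u x) (v x) ∂μ := by
  have hj : ∀ᵐ x ∂μ, LipschitzLinearGrowth (j x) (a x) k := by
    filter_upwards [hlip, hgrowth] with x hx hxgrowth
    exact .of_clarkeDeriv_le hx hk fun ξ =>
      clarkeDeriv_le_mul_norm_of_forall_mem_clarkeSubdiffInner hx (hxgrowth ξ)
  exact clarkeDeriv_integralFunctional_le
    (integrable_comp_of_lipschitzLinearGrowth hmeas hint0 ha hk hj) ha hk hj u v hmeas'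

/-- Under (H1)–(H3), the Clarke directional derivative of the integral functional
`J(v) = ∫ j(x, v(x)) dμ` on `L²(Γ, μ; ℝ^d)` is dominated by the integral of the pointwise
Clarke directional derivatives: `J⁰(u; v) ≤ ∫ j⁰(x, u(x); v(x)) dμ`. -/
theorem clarkeDeriv_integral_functional_le {d : ℕ}
    {Γ : Type*} [MeasurableSpace Γ] (μ : Measure Γ) [IsFiniteMeasure μ]
    (j : Γ → EuclideanSpace ℝ (Fin d) → ℝ)
    (hmeas : ∀ ξ : EuclideanSpace ℝ (Fin d), Measurable (fun x => j x ξ))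
    (hint0 : Integrable (fun x => j x 0) μ)
    (hlip : ∀ᵐ x ∂μ, LocallyLipschitz (j x))
    (k₀ k₁ : ℝ) (hk₀ : 0 ≤ k₀) (hk₁ : 0 ≤ k₁)
    (hgrowth : ∀ᵐ x ∂μ, ∀ ξ : EuclideanSpace ℝ (Fin d),
      ∀ η ∈ clarkeSubdiffInner (j x) ξ, ‖η‖ ≤ k₀ + k₁ * ‖ξ‖)
    (u v : Lp (EuclideanSpace ℝ (Fin d)) 2 μ)
    (hmeas' : Measurable (fun x => clarkeDeriv (j x) (u x) (v x))) :
    clarkeDeriv (fun w : Lp (EuclideanSpace ℝ (Fin d)) 2 μ => ∫ x, j x (w x) ∂μ) u v ≤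
      ∫ x, clarkeDeriv (j x) (u x) (v x) ∂μ := by
  exact clarkeDeriv_integral_functional_le_general (fun ξ => (hmeas ξ).aestronglyMeasurable) hint0
    hlip (memLp_const k₀) hk₁ hgrowth u v hmeas'.aestronglyMeasurable
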